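/- arXiv:2002.00558 — 6 statements merged into one kernel-verified Lean document; each statement's English description precedes it below -/
import Mathlib

section
/- Let μ, θ, μ̂ be real-valued random variables on a common probability space such that the pair (μ̂, θ) has the same joint distribution as the pair (μ, θ). If Pr[|θ − μ| ≥ ε] ≤ δ for some ε, δ > 0, then Pr[|μ̂ − μ| ≥ 2ε] ≤ 2δ. -/
open MeasureTheory

section Resampling

open ProbabilityTheory

variable {Ω E : Type*} [MeasurableSpace Ω] [PseudoMetricSpace E]

theorem setOf_add_le_dist_subset_union {α : Type*} (X Y Z : α → E) (a b : ℝ) :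
    {x | a + b ≤ dist (X x) (Z x)} ⊆ {x | a ≤ dist (X x) (Y x)} ∪ {x | b ≤ dist (Y x) (Z x)} :=
  fun x (hx : a + b ≤ dist (X x) (Z x)) ↦
    le_or_le_of_add_le_add (hx.trans (dist_triangle (X x) (Y x) (Z x)))

theorem measure_add_le_dist_le_add (P : Measure Ω) (X Y Z : Ω → E) (a b : ℝ) :
    P {ω | a + b ≤ dist (X ω) (Z ω)} ≤
      P {ω | a ≤ dist (X ω) (Y ω)} + P {ω | b ≤ dist (Y ω) (Z ω)} :=
  (measure_mono (setOf_add_le_dist_subset_union X Y Z a b)).trans (measure_union_le _ _)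

variable [SecondCountableTopology E] [MeasurableSpace E] [OpensMeasurableSpace E]

theorem measure_le_dist_eq_of_identDistrib {Ω' : Type*} [MeasurableSpace Ω']
    {P : Measure Ω} {P' : Measure Ω'} {X Y : Ω → E} {X' Y' : Ω' → E}
    (h : IdentDistrib (fun ω ↦ (X ω, Y ω)) (fun ω ↦ (X' ω, Y' ω)) P P') (a : ℝ) :
    P {ω | a ≤ dist (X ω) (Y ω)} = P' {ω | a ≤ dist (X' ω) (Y' ω)} :=
  h.measure_mem_eq (s := {p : E × E | a ≤ dist p.1 p.2})
    (measurableSet_le measurable_const measurable_dist)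

theorem stmt0_general {P : Measure Ω} {μ θ μhat : Ω → E}
    (h : IdentDistrib (fun ω ↦ (μhat ω, θ ω)) (fun ω ↦ (μ ω, θ ω)) P P) (ε : ℝ) :
    P {ω | 2 * ε ≤ dist (μhat ω) (μ ω)} ≤ 2 * P {ω | ε ≤ dist (θ ω) (μ ω)} :=
  calc P {ω | 2 * ε ≤ dist (μhat ω) (μ ω)}
      ≤ P {ω | ε ≤ dist (μhat ω) (θ ω)} + P {ω | ε ≤ dist (θ ω) (μ ω)} := by
        simpa only [two_mul] using measure_add_le_dist_le_add P μhat θ μ ε ε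
    _ = P {ω | ε ≤ dist (μ ω) (θ ω)} + P {ω | ε ≤ dist (θ ω) (μ ω)} := by
        rw [measure_le_dist_eq_of_identDistrib h]
    _ = 2 * P {ω | ε ≤ dist (θ ω) (μ ω)} := by
        simp only [dist_comm (μ _), two_mul]

end Resampling

/-- **Posterior resampling concentration.** If the pair `(μ̂, θ)` has the same joint
distribution as `(μ, θ)` and `Pr[|θ − μ| ≥ ε] ≤ δ`, then `Pr[|μ̂ − μ| ≥ 2ε] ≤ 2δ`. -/
theorem stmt0 {Ω : Type*} [MeasurableSpace Ω] (P : Measure Ω) [IsProbabilityMeasure P]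
    (μ θ μhat : Ω → ℝ) (hμ : Measurable μ) (hθ : Measurable θ) (hμhat : Measurable μhat)
    (hdist : Measure.map (fun ω => (μhat ω, θ ω)) P = Measure.map (fun ω => (μ ω, θ ω)) P)
    (ε δ : ℝ) (hε : 0 < ε) (hδ : 0 < δ)
    (h : P {ω | ε ≤ |θ ω - μ ω|} ≤ ENNReal.ofReal δ) :
    P {ω | 2 * ε ≤ |μhat ω - μ ω|} ≤ ENNReal.ofReal (2 * δ) := by
  rw [ENNReal.ofReal_mul zero_le_two, ENNReal.ofReal_ofNat]
  exact (stmt0_general ⟨(hμhat.prodMk hθ).aemeasurable, (hμ.prodMk hθ).aemeasurable, hdist⟩ ε).trans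
    (mul_le_mul_right h 2)
end

section
/- Let P be a probability measure on [0,1]. Let μ be a random variable with law P and, conditionally on μ, let S have the binomial distribution with n trials and success probability μ. Let μ̂ be a real-valued random variable on the same probability space such that the pair (μ̂, S) has the same joint distribution as the pair (μ, S). Then for every ε > 0, Pr[|μ̂ − μ| ≥ 2ε] ≤ 4·exp(−2nε²). -/
open MeasureTheory

/-! The empirical mean `S / n` is within `ε` of `μ` except on an event of probability at most
`2 * exp (-2 * n * ε ^ 2)`. This event depends on the pair `(μ, S)` only, so resampling `μ`
preserves its probability, and by the triangle inequality `μ̂` can be `2 * ε` away from `μ` only if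
`S / n` is `ε` away from one of the two. -/

open ProbabilityTheory unitInterval
open scoped NNReal ENNReal

section SubGaussian

variable {Ω : Type*} [MeasurableSpace Ω] {P : Measure Ω} {X : Ω → ℝ} {c : ℝ≥0} {ε : ℝ}

lemma measureReal_abs_ge_le_of_hasSubgaussianMGF (hX : HasSubgaussianMGF X c P) (hε : 0 ≤ ε) :
    P.real {ω | ε ≤ |X ω|} ≤ 2 * Real.exp (-ε ^ 2 / (2 * c)) := by
  have h_union : {ω | ε ≤ |X ω|} = {ω | ε ≤ X ω} ∪ {ω | ε ≤ (-X) ω} := by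
    ext ω
    simp [le_abs]
  calc P.real {ω | ε ≤ |X ω|}
      ≤ P.real {ω | ε ≤ X ω} + P.real {ω | ε ≤ (-X) ω} := h_union ▸ measureReal_union_le _ _
    _ ≤ Real.exp (-ε ^ 2 / (2 * c)) + Real.exp (-ε ^ 2 / (2 * c)) :=
      add_le_add (hX.measure_ge_le hε) (hX.neg.measure_ge_le hε)
    _ = 2 * Real.exp (-ε ^ 2 / (2 * c)) := (two_mul _).symm

end SubGaussian

section Binomial

variable (n : ℕ) (p : I)

lemma hasSubgaussianMGF_bernoulliMeasure :
    HasSubgaussianMGF (fun x : ℝ ↦ x - p) (1 / 4) Ber((1 : ℝ), (0 : ℝ), p) := by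
  have h_mem : ∀ᵐ x ∂Ber((1 : ℝ), (0 : ℝ), p), x ∈ Set.Icc (0 : ℝ) 1 := by
    rw [ae_iff]
    exact bernoulliMeasure_apply_of_notMem_of_notMem p measurableSet_Icc.compl (by simp) (by simp)
  convert hasSubgaussianMGF_of_mem_Icc aemeasurable_id' h_mem using 1
  · simp [integral_bernoulliMeasure]
  · norm_num

lemma mgf_natCast_binomial (t : ℝ) :
    mgf (fun k : ℕ ↦ (k : ℝ)) (binomial n p) t =
      mgf (fun x ↦ x) Ber((1 : ℝ), (0 : ℝ), p) t ^ n := by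
  simp only [mgf, integral_binomial, integral_bernoulliMeasure, smul_eq_mul, mul_one, mul_zero,
    Real.exp_zero, add_pow, mul_pow, ← Real.exp_nat_mul]
  refine Finset.sum_congr (by ext; simp) fun k _ ↦ ?_
  rw [mul_comm t]
  ring

lemma hasSubgaussianMGF_binomial :
    HasSubgaussianMGF (fun k : ℕ ↦ (k : ℝ) - n * p) (n / 4) (binomial n p) where
  integrable_exp_mul _ := integrable_binomial _
  mgf_le t := calc
    mgf (fun k : ℕ ↦ (k : ℝ) - n * p) (binomial n p) t
      = mgf (fun x ↦ x) Ber((1 : ℝ), (0 : ℝ), p) t ^ n * Real.exp (t * -(n * p)) := by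
        simp only [sub_eq_add_neg, mgf_add_const, mgf_natCast_binomial]
    _ = mgf (fun x : ℝ ↦ x - p) Ber((1 : ℝ), (0 : ℝ), p) t ^ n := by
        simp only [sub_eq_add_neg, mgf_add_const, mul_pow, ← Real.exp_nat_mul]
        ring_nf
    _ ≤ Real.exp ((1 / 4 : ℝ≥0) * t ^ 2 / 2) ^ n :=
        pow_le_pow_left₀ mgf_nonneg ((hasSubgaussianMGF_bernoulliMeasure p).mgf_le t) n
    _ = Real.exp ((n / 4 : ℝ≥0) * t ^ 2 / 2) := by
        rw [← Real.exp_nat_mul]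
        push_cast
        ring_nf

lemma binomial_real_dist_div_ge_le {ε : ℝ} (hε : 0 ≤ ε) :
    (binomial n p).real {k | ε ≤ dist ((k : ℝ) / n) p} ≤ 2 * Real.exp (-2 * n * ε ^ 2) := by
  rcases Nat.eq_zero_or_pos n with rfl | hn
  · calc (binomial 0 p).real _ ≤ 1 := measureReal_le_one
      _ ≤ 2 * Real.exp (-2 * (0 : ℕ) * ε ^ 2) := by norm_num
  have h_scale (k : ℕ) : n * dist ((k : ℝ) / n) p = |(k : ℝ) - n * p| := by
    rw [Real.dist_eq, ← Nat.abs_cast n, ← abs_mul, Nat.abs_cast]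
    field_simp
  have h_tail := measureReal_abs_ge_le_of_hasSubgaussianMGF (hasSubgaussianMGF_binomial n p)
    (by positivity : 0 ≤ n * ε)
  have h_exponent : -(n * ε) ^ 2 / (2 * (n / 4 : ℝ≥0)) = -2 * n * ε ^ 2 := by
    push_cast
    field_simp
    ring
  simpa only [← h_scale, h_exponent, mul_le_mul_iff_right₀ (Nat.cast_pos.2 hn : (0 : ℝ) < n)]
    using h_tail

lemma measurable_binomial : Measurable (binomial n) := by
  refine Measure.measurable_of_measurable_coe _ fun s _ ↦ ?_
  simp only [binomial_eq_sum_dirac, Measure.finsetSum_apply, Measure.smul_apply, smul_eq_mul]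
  fun_prop

/-- The binomial distribution with `n` trials as a kernel in its success probability. It lives on
`ℝ`, where success probabilities are usually random variables, and clamps them to `[0, 1]`. -/
noncomputable def binomialKernel : Kernel ℝ ℕ where
  toFun x := binomial n (Set.projIcc 0 1 zero_le_one x)
  measurable' := (measurable_binomial n).comp continuous_projIcc.measurable

instance isMarkovKernel_binomialKernel : IsMarkovKernel (binomialKernel n) where
  isProbabilityMeasure _ := isProbabilityMeasure_binomial

lemma binomialKernel_coe : binomialKernel n p = binomial n p :=
  congrArg (binomial n) (Set.projIcc_val zero_le_one p)

end Binomial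

section CondDistrib

variable {Ω 𝓧 𝓨 : Type*} [MeasurableSpace Ω] [MeasurableSpace 𝓧] [MeasurableSpace 𝓨]
  {P : Measure Ω} {X : Ω → 𝓧} {Y : Ω → 𝓨} {κ : Kernel 𝓧 𝓨} [IsSFiniteKernel κ]

lemma measure_ext_prod_singleton [Countable 𝓨] [MeasurableSingletonClass 𝓨]
    {ρ ρ' : Measure (𝓧 × 𝓨)}
    (h : ∀ s, MeasurableSet s → ∀ y, ρ (s ×ˢ {y}) = ρ' (s ×ˢ {y})) : ρ = ρ' := by
  ext B hB
  let slice (y : 𝓨) : Set 𝓧 := {x | (x, y) ∈ B}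
  have h_slice (y : 𝓨) : MeasurableSet (slice y) := measurable_prodMk_right hB
  have hB_eq : B = ⋃ y, slice y ×ˢ {y} := by
    ext ⟨x, y⟩
    simp [slice]
  have h_disjoint : Pairwise (Function.onFun Disjoint fun y ↦ slice y ×ˢ {y}) :=
    fun y z hyz ↦ Set.disjoint_prod.2 (Or.inr (Set.disjoint_singleton.2 hyz))
  have h_meas (y : 𝓨) : MeasurableSet (slice y ×ˢ {y}) := (h_slice y).prod (.singleton y)
  rw [hB_eq, measure_iUnion h_disjoint h_meas, measure_iUnion h_disjoint h_meas]
  exact tsum_congr fun y ↦ h _ (h_slice y) y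

lemma hasCondDistrib_of_measure_inter_preimage_singleton [SFinite P] [Countable 𝓨]
    [MeasurableSingletonClass 𝓨] (hX : AEMeasurable X P) (hY : AEMeasurable Y P)
    (h : ∀ s, MeasurableSet s → ∀ y,
      P (X ⁻¹' s ∩ Y ⁻¹' {y}) = ∫⁻ x in s, κ x {y} ∂(P.map X)) :
    HasCondDistrib Y X κ P where
  aemeasurable := hX.prodMk hY
  map_eq := measure_ext_prod_singleton fun s hs y ↦ by
    rw [Measure.map_apply_of_aemeasurable (hX.prodMk hY) (hs.prod (.singleton y)),
      Measure.compProd_apply_prod hs (.singleton y), ← h s hs y, Set.mk_preimage_prod]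

lemma measure_prodMk_mem_le_of_hasCondDistrib [IsProbabilityMeasure P] {δ : ℝ≥0∞}
    {B : Set (𝓧 × 𝓨)} (h : HasCondDistrib Y X κ P) (hB : MeasurableSet B)
    (hδ : ∀ᵐ x ∂(P.map X), κ x (Prod.mk x ⁻¹' B) ≤ δ) :
    P {ω | (X ω, Y ω) ∈ B} ≤ δ := by
  have := Measure.isProbabilityMeasure_map h.aemeasurable_fst
  calc P {ω | (X ω, Y ω) ∈ B}
      = P.map (fun ω ↦ (X ω, Y ω)) B := (Measure.map_apply_of_aemeasurable h.aemeasurable hB).symm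
    _ = ∫⁻ x, κ x (Prod.mk x ⁻¹' B) ∂(P.map X) := by rw [h.map_eq, Measure.compProd_apply hB]
    _ ≤ ∫⁻ _, δ ∂(P.map X) := lintegral_mono_ae hδ
    _ = δ := by simp

end CondDistrib

section Resampling

variable {Ω E 𝓨 : Type*} [MeasurableSpace Ω] [PseudoMetricSpace E] [MeasurableSpace E]
  [OpensMeasurableSpace E] [SecondCountableTopology E] [MeasurableSpace 𝓨]
  {P : Measure Ω} {X X' : Ω → E} {Y : Ω → 𝓨} {f : 𝓨 → E}

lemma measurableSet_le_dist_estimator (hf : Measurable f) (ε : ℝ) :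
    MeasurableSet {q : E × 𝓨 | ε ≤ dist (f q.2) q.1} :=
  measurableSet_le measurable_const ((hf.comp measurable_snd).dist measurable_fst)

lemma measure_two_mul_le_dist_le_of_identDistrib
    (h : IdentDistrib (fun ω ↦ (X' ω, Y ω)) (fun ω ↦ (X ω, Y ω)) P P) (hf : Measurable f)
    (ε : ℝ) :
    P {ω | 2 * ε ≤ dist (X' ω) (X ω)} ≤ 2 * P {ω | ε ≤ dist (f (Y ω)) (X ω)} := by
  have h_resample : P {ω | ε ≤ dist (f (Y ω)) (X' ω)} = P {ω | ε ≤ dist (f (Y ω)) (X ω)} :=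
    h.measure_mem_eq (measurableSet_le_dist_estimator hf ε)
  have h_triangle : {ω | 2 * ε ≤ dist (X' ω) (X ω)} ⊆
      {ω | ε ≤ dist (f (Y ω)) (X' ω)} ∪ {ω | ε ≤ dist (f (Y ω)) (X ω)} := by
    intro ω (hω : 2 * ε ≤ dist (X' ω) (X ω))
    by_contra! h_close
    simp only [Set.mem_union, Set.mem_ofPred_eq, not_or, not_le] at h_close
    linarith [dist_triangle_left (X' ω) (X ω) (f (Y ω))]
  calc P {ω | 2 * ε ≤ dist (X' ω) (X ω)}
      ≤ P {ω | ε ≤ dist (f (Y ω)) (X' ω)} + P {ω | ε ≤ dist (f (Y ω)) (X ω)} :=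
        (measure_mono h_triangle).trans (measure_union_le _ _)
    _ = 2 * P {ω | ε ≤ dist (f (Y ω)) (X ω)} := by rw [h_resample, two_mul]

end Resampling

lemma measure_dist_div_ge_le_of_hasCondDistrib_binomialKernel {Ω : Type*} [MeasurableSpace Ω]
    {P : Measure Ω} [IsProbabilityMeasure P] {X : Ω → ℝ} {Y : Ω → ℕ} {n : ℕ} {ε : ℝ}
    (h : HasCondDistrib Y X (binomialKernel n) P) (hX : ∀ᵐ x ∂(P.map X), x ∈ I) (hε : 0 ≤ ε) :
    P {ω | ε ≤ dist ((Y ω : ℝ) / n) (X ω)} ≤ ENNReal.ofReal (2 * Real.exp (-2 * n * ε ^ 2)) := by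
  refine measure_prodMk_mem_le_of_hasCondDistrib h
    (measurableSet_le_dist_estimator (f := fun k : ℕ ↦ (k : ℝ) / n) .of_discrete ε) ?_
  filter_upwards [hX] with x hx
  rw [binomialKernel_coe n ⟨x, hx⟩, ← ofReal_measureReal]
  exact ENNReal.ofReal_le_ofReal (binomial_real_dist_div_ge_le n ⟨x, hx⟩ hε)

/-- **Bayesian Chernoff bound for Bernoulli rewards.** `μ` is drawn from a prior on `[0,1]`,
`S` is binomially distributed with `n` trials and success probability `μ` conditionally
on `μ`, and `μ̂` is a posterior sample, i.e. `(μ̂, S)` has the same joint law as `(μ, S)`.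
Then `Pr[|μ̂ − μ| ≥ 2ε] ≤ 4 exp(−2nε²)`. -/
theorem stmt1 {Ω : Type*} [MeasurableSpace Ω] (P : Measure Ω) [IsProbabilityMeasure P]
    (μ μhat : Ω → ℝ) (S : Ω → ℕ) (n : ℕ)
    (hμ : Measurable μ) (hμhat : Measurable μhat) (hS : Measurable S)
    (hrange : ∀ᵐ ω ∂P, μ ω ∈ Set.Icc (0 : ℝ) 1)
    (hcond : ∀ (A : Set ℝ), MeasurableSet A → ∀ k : ℕ,
      P (μ ⁻¹' A ∩ S ⁻¹' {k}) =
        ∫⁻ x in A, ENNReal.ofReal ((n.choose k : ℝ) * x ^ k * (1 - x) ^ (n - k))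
          ∂(Measure.map μ P))
    (hdist : Measure.map (fun ω => (μhat ω, S ω)) P = Measure.map (fun ω => (μ ω, S ω)) P)
    (ε : ℝ) (hε : 0 < ε) :
    P {ω | 2 * ε ≤ |μhat ω - μ ω|} ≤ ENNReal.ofReal (4 * Real.exp (-2 * n * ε ^ 2)) := by
  have h_unit : ∀ᵐ x ∂(P.map μ), x ∈ I := (ae_map_iff hμ.aemeasurable measurableSet_Icc).2 hrange
  have h_binomial : HasCondDistrib S μ (binomialKernel n) P := by
    refine hasCondDistrib_of_measure_inter_preimage_singleton hμ.aemeasurable hS.aemeasurable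
      fun A hA k ↦ (hcond A hA k).trans (lintegral_congr_ae (ae_restrict_of_ae ?_))
    filter_upwards [h_unit] with x hx
    rw [binomialKernel_coe n ⟨x, hx⟩, binomial_singleton]
  have h_hoeffding : P {ω | ε ≤ dist ((S ω : ℝ) / n) (μ ω)} ≤
      ENNReal.ofReal (2 * Real.exp (-2 * n * ε ^ 2)) :=
    measure_dist_div_ge_le_of_hasCondDistrib_binomialKernel h_binomial h_unit hε.le
  have h_ident : IdentDistrib (fun ω ↦ (μhat ω, S ω)) (fun ω ↦ (μ ω, S ω)) P P :=
    ⟨(hμhat.prodMk hS).aemeasurable, (hμ.prodMk hS).aemeasurable, hdist⟩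
  calc P {ω | 2 * ε ≤ |μhat ω - μ ω|}
      ≤ 2 * P {ω | ε ≤ dist ((S ω : ℝ) / n) (μ ω)} :=
        measure_two_mul_le_dist_le_of_identDistrib h_ident (f := fun k : ℕ ↦ (k : ℝ) / n)
          .of_discrete ε
    _ ≤ 2 * ENNReal.ofReal (2 * Real.exp (-2 * n * ε ^ 2)) := by gcongr
    _ = ENNReal.ofReal (4 * Real.exp (-2 * n * ε ^ 2)) := by
        rw [← ENNReal.ofReal_ofNat 2, ← ENNReal.ofReal_mul zero_le_two, ← mul_assoc]
        norm_num
end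

section
/- Let M ≥ 1 be a real number and let a, b satisfy 1 ≤ a ≤ M and 1 ≤ b ≤ M. If X has the Beta(a, b) distribution, then for every t ∈ (0, 1), t^M ≤ Pr[X > 1 − t] ≤ M·t. -/
open MeasureTheory

/-- The Beta(a, b) probability measure on `[0,1]`: the normalization of the measure on
`(0,1)` with density `x^(a−1)·(1−x)^(b−1)` with respect to Lebesgue measure. -/
noncomputable def betaMeasure (a b : ℝ) : Measure ℝ :=
  (((volume.restrict (Set.Ioo (0 : ℝ) 1)).withDensity
      (fun x => ENNReal.ofReal (x ^ (a - 1) * (1 - x) ^ (b - 1)))) Set.univ)⁻¹ •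
    (volume.restrict (Set.Ioo (0 : ℝ) 1)).withDensity
      (fun x => ENNReal.ofReal (x ^ (a - 1) * (1 - x) ^ (b - 1)))

/-!
The density ratio of Beta(a₁, b₁) to Beta(a, b) is proportional to `x^(a₁-a) (1-x)^(b₁-b)`, which
is increasing when `a ≤ a₁` and `b₁ ≤ b`; a monotone likelihood ratio implies stochastic order.
Hence Beta(a, b) lies between Beta(1, M) and Beta(M, 1), whose upper tails at `1 - t` are `t^M` and
`1 - (1-t)^M`, and the latter is at most `M t` by Bernoulli's inequality.
-/

open Set
open ProbabilityTheory (beta beta_pos)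
open scoped ENNReal

section LikelihoodRatio

variable {α : Type*} [MeasurableSpace α] [LinearOrder α] {μ : Measure α} {f g : α → ℝ≥0∞}

/-- The likelihood ratio order between the (unnormalized) densities `f` and `g` with respect to
`μ`: the ratio `g / f` is increasing. It is cross-multiplied so that no division by zero occurs. -/
def LikelihoodRatioLE (μ : Measure α) (f g : α → ℝ≥0∞) : Prop :=
  ∀ᵐ x ∂μ, ∀ᵐ y ∂μ, x ≤ y → f y * g x ≤ f x * g y

namespace LikelihoodRatioLE

lemma withDensity_mul_withDensity_le (h : LikelihoodRatioLE μ f g) (hf : AEMeasurable f μ)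
    (hg : AEMeasurable g μ) {A B : Set α} (hA : MeasurableSet A) (hB : MeasurableSet B)
    (hAB : ∀ x ∈ A, ∀ y ∈ B, x ≤ y) :
    μ.withDensity f B * μ.withDensity g A ≤ μ.withDensity f A * μ.withDensity g B := by
  simp only [withDensity_apply, hA, hB]
  calc (∫⁻ y in B, f y ∂μ) * ∫⁻ x in A, g x ∂μ
      = ∫⁻ x in A, ∫⁻ y in B, f y * g x ∂μ ∂μ := by
        simp_rw [lintegral_mul_const'' _ hf.restrict, lintegral_const_mul'' _ hg.restrict]
    _ ≤ ∫⁻ x in A, ∫⁻ y in B, f x * g y ∂μ ∂μ := by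
        refine lintegral_mono_ae ?_
        filter_upwards [ae_restrict_of_ae h, ae_restrict_mem hA] with x hx hxA
        refine lintegral_mono_ae ?_
        filter_upwards [ae_restrict_of_ae hx, ae_restrict_mem hB] with y hxy hyB
        exact hxy (hAB x hxA y hyB)
    _ = (∫⁻ x in A, f x ∂μ) * ∫⁻ y in B, g y ∂μ := by
        simp_rw [lintegral_const_mul'' _ hg.restrict, lintegral_mul_const'' _ hf.restrict]

variable [TopologicalSpace α] [OrderClosedTopology α] [OpensMeasurableSpace α]

lemma withDensity_Ioi_mul_univ_le (h : LikelihoodRatioLE μ f g) (hf : AEMeasurable f μ)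
    (hg : AEMeasurable g μ) (s : α) :
    μ.withDensity f (Ioi s) * μ.withDensity g univ ≤
      μ.withDensity g (Ioi s) * μ.withDensity f univ := by
  have cross := h.withDensity_mul_withDensity_le hf hg measurableSet_Iic measurableSet_Ioi
    fun x (hx : x ≤ s) y (hy : s < y) ↦ hx.trans hy.le
  rw [← measure_add_measure_compl (μ := μ.withDensity f) (measurableSet_Ioi (a := s)),
    ← measure_add_measure_compl (μ := μ.withDensity g) (measurableSet_Ioi (a := s)), compl_Ioi,
    mul_add, mul_add, mul_comm (μ.withDensity g (Ioi s)), mul_comm (μ.withDensity g (Ioi s))]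
  gcongr

lemma normalized_withDensity_Ioi_le (h : LikelihoodRatioLE μ f g) (hf : AEMeasurable f μ)
    (hg : AEMeasurable g μ) (hg_zero : μ.withDensity g univ ≠ 0)
    (hg_top : μ.withDensity g univ ≠ ∞) (s : α) :
    (μ.withDensity f univ)⁻¹ * μ.withDensity f (Ioi s) ≤
      (μ.withDensity g univ)⁻¹ * μ.withDensity g (Ioi s) := by
  rw [mul_comm, mul_comm (μ.withDensity g univ)⁻¹, ← div_eq_mul_inv, ← div_eq_mul_inv]
  refine ENNReal.div_le_of_le_mul ?_
  rw [← ENNReal.mul_div_right_comm, ENNReal.le_div_iff_mul_le (.inl hg_zero) (.inl hg_top)]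
  exact h.withDensity_Ioi_mul_univ_le hf hg s

end LikelihoodRatioLE

end LikelihoodRatio

lemma rpow_mul_rpow_le_rpow_mul_rpow {x y p q : ℝ} (hx : 0 < x) (hxy : x ≤ y) (hpq : p ≤ q) :
    y ^ p * x ^ q ≤ x ^ p * y ^ q := by
  have hy : 0 < y := hx.trans_le hxy
  calc y ^ p * x ^ q = y ^ p * (x ^ p * x ^ (q - p)) := by
        rw [← Real.rpow_add hx, add_sub_cancel]
    _ ≤ y ^ p * (x ^ p * y ^ (q - p)) := by
        gcongr
    _ = x ^ p * (y ^ p * y ^ (q - p)) := mul_left_comm _ _ _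
    _ = x ^ p * y ^ q := by rw [← Real.rpow_add hy, add_sub_cancel]

section Beta

variable {a a₁ b b₁ s t : ℝ}

/-- The unnormalized density of the Beta(a, b) distribution, meaningful for `x ∈ (0, 1)`. -/
noncomputable def betaWeight (a b x : ℝ) : ℝ :=
  x ^ (a - 1) * (1 - x) ^ (b - 1)

lemma measurable_betaWeight (a b : ℝ) : Measurable (betaWeight a b) := by
  unfold betaWeight
  fun_prop

lemma betaWeight_nonneg {x : ℝ} (hx : x ∈ Icc 0 1) : 0 ≤ betaWeight a b x :=
  mul_nonneg (Real.rpow_nonneg hx.1 _) (Real.rpow_nonneg (sub_nonneg.2 hx.2) _)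

lemma betaWeight_mul_betaWeight_le {x y : ℝ} (hx : 0 < x) (hxy : x ≤ y) (hy : y < 1)
    (ha : a ≤ a₁) (hb : b₁ ≤ b) :
    betaWeight a b y * betaWeight a₁ b₁ x ≤ betaWeight a b x * betaWeight a₁ b₁ y := by
  have left_factor : y ^ (a - 1) * x ^ (a₁ - 1) ≤ x ^ (a - 1) * y ^ (a₁ - 1) :=
    rpow_mul_rpow_le_rpow_mul_rpow hx hxy (by gcongr)
  have right_factor : (1 - x) ^ (b₁ - 1) * (1 - y) ^ (b - 1) ≤
      (1 - y) ^ (b₁ - 1) * (1 - x) ^ (b - 1) :=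
    rpow_mul_rpow_le_rpow_mul_rpow (sub_pos.2 hy) (by gcongr) (by gcongr)
  have left_nonneg : 0 ≤ x ^ (a - 1) * y ^ (a₁ - 1) :=
    mul_nonneg (Real.rpow_nonneg hx.le _) (Real.rpow_nonneg (hx.le.trans hxy) _)
  have right_nonneg : 0 ≤ (1 - x) ^ (b₁ - 1) * (1 - y) ^ (b - 1) :=
    mul_nonneg (Real.rpow_nonneg (by linarith) _) (Real.rpow_nonneg (by linarith) _)
  calc betaWeight a b y * betaWeight a₁ b₁ x
      = y ^ (a - 1) * x ^ (a₁ - 1) * ((1 - x) ^ (b₁ - 1) * (1 - y) ^ (b - 1)) := by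
        unfold betaWeight; ring
    _ ≤ x ^ (a - 1) * y ^ (a₁ - 1) * ((1 - y) ^ (b₁ - 1) * (1 - x) ^ (b - 1)) :=
        mul_le_mul left_factor right_factor right_nonneg left_nonneg
    _ = betaWeight a b x * betaWeight a₁ b₁ y := by unfold betaWeight; ring

lemma likelihoodRatioLE_betaWeight (ha : a ≤ a₁) (hb : b₁ ≤ b) :
    LikelihoodRatioLE (volume.restrict (Ioo 0 1))
      (fun x ↦ ENNReal.ofReal (betaWeight a b x)) fun x ↦ ENNReal.ofReal (betaWeight a₁ b₁ x) := by
  refine ae_restrict_of_forall_mem measurableSet_Ioo fun x hx ↦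
    ae_restrict_of_forall_mem measurableSet_Ioo fun y hy hxy ↦ ?_
  rw [← ENNReal.ofReal_mul (betaWeight_nonneg (Ioo_subset_Icc_self hy)),
    ← ENNReal.ofReal_mul (betaWeight_nonneg (Ioo_subset_Icc_self hx))]
  exact ENNReal.ofReal_le_ofReal (betaWeight_mul_betaWeight_le hx.1 hxy hy.2 ha hb)

lemma lintegral_betaWeight (ha : 0 < a) (hb : 0 < b) :
    ∫⁻ x in Ioo 0 1, ENNReal.ofReal (betaWeight a b x) = ENNReal.ofReal (beta a b) := by
  have hbeta : 0 < beta a b := beta_pos ha hb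
  have total := ProbabilityTheory.lintegral_betaPDF_eq_one ha hb
  simp_rw [ProbabilityTheory.lintegral_betaPDF, mul_assoc,
    ENNReal.ofReal_mul (one_div_nonneg.2 hbeta.le)] at total
  rw [lintegral_const_mul' _ _ ENNReal.ofReal_ne_top, one_div,
    ENNReal.ofReal_inv_of_pos hbeta] at total
  simpa only [betaWeight, inv_inv] using
    ENNReal.eq_inv_of_mul_eq_one_left ((mul_comm _ _).trans total)

lemma betaMeasure_apply (ha : 0 < a) (hb : 0 < b) {E : Set ℝ} (hE : MeasurableSet E) :
    betaMeasure a b E =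
      (ENNReal.ofReal (beta a b))⁻¹ * ∫⁻ x in E ∩ Ioo 0 1, ENNReal.ofReal (betaWeight a b x) := by
  rw [← lintegral_betaWeight ha hb, betaMeasure, Measure.smul_apply, smul_eq_mul,
    withDensity_apply _ .univ, withDensity_apply _ hE, Measure.restrict_univ,
    Measure.restrict_restrict hE]
  rfl

lemma betaMeasure_Ioi_mono (ha : 0 < a) (haa₁ : a ≤ a₁) (hb₁ : 0 < b₁) (hbb₁ : b₁ ≤ b) (s : ℝ) :
    betaMeasure a b (Ioi s) ≤ betaMeasure a₁ b₁ (Ioi s) := by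
  have mass : (volume.restrict (Ioo 0 1)).withDensity
      (fun x ↦ ENNReal.ofReal (betaWeight a₁ b₁ x)) univ = ENNReal.ofReal (beta a₁ b₁) := by
    rw [withDensity_apply _ .univ, Measure.restrict_univ,
      lintegral_betaWeight (ha.trans_le haa₁) hb₁]
  refine (likelihoodRatioLE_betaWeight haa₁ hbb₁).normalized_withDensity_Ioi_le
    (measurable_betaWeight a b).ennreal_ofReal.aemeasurable
    (measurable_betaWeight a₁ b₁).ennreal_ofReal.aemeasurable ?_ ?_ s
  · simpa only [mass, ne_eq, ENNReal.ofReal_eq_zero, not_le] using beta_pos (ha.trans_le haa₁) hb₁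
  · exact mass ▸ ENNReal.ofReal_ne_top

lemma integrableOn_betaWeight (ha : 0 < a) (hb : 0 < b) :
    IntegrableOn (betaWeight a b) (Ioo 0 1) := by
  refine (lintegral_ofReal_ne_top_iff_integrable
    (measurable_betaWeight a b).aestronglyMeasurable ?_).1
    (lintegral_betaWeight ha hb ▸ ENNReal.ofReal_ne_top)
  exact ae_restrict_of_forall_mem measurableSet_Ioo
    fun x hx ↦ betaWeight_nonneg (Ioo_subset_Icc_self hx)

lemma betaMeasure_Ioi (ha : 0 < a) (hb : 0 < b) (hs : s ∈ Icc 0 1) :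
    betaMeasure a b (Ioi s) =
      ENNReal.ofReal ((beta a b)⁻¹ * ∫ x in s..1, betaWeight a b x) := by
  have hIoo : Ioo s 1 ⊆ Ioo 0 1 := Ioo_subset_Ioo_left hs.1
  have tail : Ioi s ∩ Ioo 0 1 = Ioo s 1 := by rw [Ioi_inter_Ioo, max_eq_left hs.1]
  rw [betaMeasure_apply ha hb measurableSet_Ioi, tail,
    ENNReal.ofReal_mul (inv_nonneg.2 (beta_pos ha hb).le),
    ENNReal.ofReal_inv_of_pos (beta_pos ha hb), intervalIntegral.integral_of_le hs.2,
    integral_Ioc_eq_integral_Ioo,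
    ofReal_integral_eq_lintegral_ofReal ((integrableOn_betaWeight ha hb).mono_set hIoo)]
  exact ae_restrict_of_forall_mem measurableSet_Ioo
    fun x hx ↦ betaWeight_nonneg (Ioo_subset_Icc_self (hIoo hx))

lemma beta_comm (a b : ℝ) : beta a b = beta b a := by
  rw [beta, beta, mul_comm, add_comm]

lemma beta_one_right (ha : 0 < a) : beta a 1 = a⁻¹ := by
  rw [beta, Real.Gamma_one, Real.Gamma_add_one ha.ne', mul_one,
    div_mul_cancel_right₀ (Real.Gamma_pos_of_pos ha).ne']

lemma betaMeasure_one_left_Ioi (hb : 0 < b) (ht : t ∈ Icc 0 1) :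
    betaMeasure 1 b (Ioi (1 - t)) = ENNReal.ofReal (t ^ b) := by
  have tail : ∫ x in (1 - t)..1, betaWeight 1 b x = t ^ b / b := by
    simp only [betaWeight, sub_self, Real.rpow_zero, one_mul]
    rw [intervalIntegral.integral_comp_sub_left (fun x ↦ x ^ (b - 1)), sub_self, sub_sub_cancel,
      integral_rpow (.inl (by linarith)), sub_add_cancel, Real.zero_rpow hb.ne', sub_zero]
  rw [betaMeasure_Ioi one_pos hb ⟨sub_nonneg.2 ht.2, sub_le_self 1 ht.1⟩, tail, beta_comm,
    beta_one_right hb, inv_inv, mul_div_cancel₀ _ hb.ne']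

lemma betaMeasure_one_right_Ioi (ha : 0 < a) (hs : s ∈ Icc 0 1) :
    betaMeasure a 1 (Ioi s) = ENNReal.ofReal (1 - s ^ a) := by
  have tail : ∫ x in s..1, betaWeight a 1 x = (1 - s ^ a) / a := by
    simp only [betaWeight, sub_self, Real.rpow_zero, mul_one]
    rw [integral_rpow (.inl (by linarith)), sub_add_cancel, Real.one_rpow]
  rw [betaMeasure_Ioi ha one_pos hs, tail, beta_one_right ha, inv_inv, mul_div_cancel₀ _ ha.ne']

end Beta

/-- **Quantile sandwich for Beta priors of bounded strength (Corollary 3.3).** If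
`X ~ Beta(a, b)` with `1 ≤ a, b ≤ M`, then `t^M ≤ Pr[X > 1 − t] ≤ M·t` for `t ∈ (0,1)`. -/
theorem stmt9 (M a b : ℝ) (hM : 1 ≤ M) (ha : 1 ≤ a) (haM : a ≤ M) (hb : 1 ≤ b) (hbM : b ≤ M)
    (t : ℝ) (ht : t ∈ Set.Ioo (0 : ℝ) 1) :
    ENNReal.ofReal (t ^ M) ≤ betaMeasure a b (Set.Ioi (1 - t)) ∧
      betaMeasure a b (Set.Ioi (1 - t)) ≤ ENNReal.ofReal (M * t) := by
  have htIcc : t ∈ Icc 0 1 := Ioo_subset_Icc_self ht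
  have hsIcc : 1 - t ∈ Icc 0 1 := Icc.mem_iff_one_sub_mem.1 htIcc
  have hM₀ : 0 < M := one_pos.trans_le hM
  constructor
  · calc ENNReal.ofReal (t ^ M) = betaMeasure 1 M (Ioi (1 - t)) :=
          (betaMeasure_one_left_Ioi hM₀ htIcc).symm
      _ ≤ betaMeasure a b (Ioi (1 - t)) :=
          betaMeasure_Ioi_mono one_pos ha (one_pos.trans_le hb) hbM _
  · have bernoulli : 1 + M * -t ≤ (1 + -t) ^ M :=
      one_add_mul_self_le_rpow_one_add (neg_le_neg htIcc.2) hM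
    calc betaMeasure a b (Ioi (1 - t)) ≤ betaMeasure M 1 (Ioi (1 - t)) :=
          betaMeasure_Ioi_mono (one_pos.trans_le ha) haM one_pos hb _
      _ = ENNReal.ofReal (1 - (1 - t) ^ M) := betaMeasure_one_right_Ioi hM₀ hsIcc
      _ ≤ ENNReal.ofReal (M * t) := by
          gcongr
          rw [← sub_eq_add_neg] at bernoulli
          linarith
end

section
/- Let M ≥ 1 and let Z have the Beta(1, M) distribution, i.e., the distribution on [0,1] with density M·(1 − z)^{M−1}. Then E[exp(M·Z/2)] ≤ 2. -/
open MeasureTheory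

/-!
The inequality `1 - z ≤ exp (-z)` gives `exp (t * z) ≤ (1 - z) ^ (-t)` for `0 ≤ t` and `z < 1`.
Multiplying the Beta(a, b) weight by `(1 - z) ^ (-t)` turns it into the Beta(a, b - t) weight, so
the exponential moment is at most the ratio `beta a (b - t) / beta a b` of normalizing constants.
For `a = 1`, `b = M` and `t = M / 2` this ratio is `(2 / M) / (1 / M) = 2`.
-/

open Set
open ProbabilityTheory (beta beta_pos lintegral_betaPDF lintegral_betaPDF_eq_one)

lemma exp_mul_le_one_sub_rpow_neg {t z : ℝ} (ht : 0 ≤ t) (hz : z < 1) :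
    Real.exp (t * z) ≤ (1 - z) ^ (-t) := by
  have hlog : Real.log (1 - z) ≤ -z := by
    linarith [Real.log_le_sub_one_of_pos (sub_pos.2 hz)]
  rw [Real.rpow_def_of_pos (sub_pos.2 hz), Real.exp_le_exp]
  linarith [mul_le_mul_of_nonneg_left hlog ht]

lemma beta_one_left {b : ℝ} (hb : 0 < b) : beta 1 b = 1 / b := by
  have hΓ : Real.Gamma b ≠ 0 := (Real.Gamma_pos_of_pos hb).ne'
  rw [beta, Real.Gamma_one, add_comm, Real.Gamma_add_one hb.ne']
  field_simp

lemma beta_one_half_div_beta_one {b : ℝ} (hb : 0 < b) : beta 1 (b / 2) / beta 1 b = 2 := by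
  rw [beta_one_left (half_pos hb), beta_one_left hb]
  field_simp

section BetaMeasure

variable {a b : ℝ}

lemma lintegral_rpow_mul_one_sub_rpow (ha : 0 < a) (hb : 0 < b) :
    ∫⁻ x in Ioo (0 : ℝ) 1, ENNReal.ofReal (x ^ (a - 1) * (1 - x) ^ (b - 1)) =
      ENNReal.ofReal (beta a b) := by
  have hβ := beta_pos ha hb
  have hnorm : ENNReal.ofReal (1 / beta a b) *
      ∫⁻ x in Ioo (0 : ℝ) 1, ENNReal.ofReal (x ^ (a - 1) * (1 - x) ^ (b - 1)) = 1 := by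
    rw [← lintegral_const_mul _ (by fun_prop), ← lintegral_betaPDF_eq_one ha hb, lintegral_betaPDF]
    simp only [← ENNReal.ofReal_mul (one_div_pos.2 hβ).le, mul_assoc]
  rw [one_div, ENNReal.ofReal_inv_of_pos hβ] at hnorm
  exact (inv_injective (ENNReal.eq_inv_of_mul_eq_one_left hnorm)).symm

lemma lintegral_betaMeasure (ha : 0 < a) (hb : 0 < b) {f : ℝ → ENNReal} (hf : Measurable f) :
    ∫⁻ z, f z ∂betaMeasure a b = (ENNReal.ofReal (beta a b))⁻¹ *
      ∫⁻ x in Ioo (0 : ℝ) 1, ENNReal.ofReal (x ^ (a - 1) * (1 - x) ^ (b - 1)) * f x := by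
  rw [betaMeasure, lintegral_smul_measure, withDensity_apply _ MeasurableSet.univ,
    Measure.restrict_univ, lintegral_rpow_mul_one_sub_rpow ha hb,
    lintegral_withDensity_eq_lintegral_mul _ (by fun_prop) hf]
  rfl

lemma ae_mem_Ioo_betaMeasure (a b : ℝ) : ∀ᵐ z ∂betaMeasure a b, z ∈ Ioo (0 : ℝ) 1 :=
  Measure.ae_smul_measure
    ((withDensity_absolutelyContinuous _ _).ae_le (ae_restrict_mem measurableSet_Ioo)) _

lemma lintegral_one_sub_rpow_betaMeasure {s : ℝ} (ha : 0 < a) (hb : 0 < b) (hbs : 0 < b + s) :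
    ∫⁻ z, ENNReal.ofReal ((1 - z) ^ s) ∂betaMeasure a b =
      ENNReal.ofReal (beta a (b + s) / beta a b) := by
  have hweight : ∀ x ∈ Ioo (0 : ℝ) 1,
      ENNReal.ofReal (x ^ (a - 1) * (1 - x) ^ (b - 1)) * ENNReal.ofReal ((1 - x) ^ s) =
        ENNReal.ofReal (x ^ (a - 1) * (1 - x) ^ (b + s - 1)) := fun x hx => by
    have hx' : 0 < 1 - x := sub_pos.2 hx.2
    rw [← ENNReal.ofReal_mul' (Real.rpow_nonneg hx'.le s), mul_assoc, ← Real.rpow_add hx',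
      sub_add_eq_add_sub]
  rw [lintegral_betaMeasure ha hb (by fun_prop), setLIntegral_congr_fun measurableSet_Ioo hweight,
    lintegral_rpow_mul_one_sub_rpow ha hbs, mul_comm, ← div_eq_mul_inv,
    ENNReal.ofReal_div_of_pos (beta_pos ha hb)]

lemma lintegral_exp_mul_betaMeasure_le {t : ℝ} (ha : 0 < a) (ht : 0 ≤ t) (htb : t < b) :
    ∫⁻ z, ENNReal.ofReal (Real.exp (t * z)) ∂betaMeasure a b ≤
      ENNReal.ofReal (beta a (b - t) / beta a b) :=
  calc ∫⁻ z, ENNReal.ofReal (Real.exp (t * z)) ∂betaMeasure a b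
      ≤ ∫⁻ z, ENNReal.ofReal ((1 - z) ^ (-t)) ∂betaMeasure a b :=
        lintegral_mono_ae <| (ae_mem_Ioo_betaMeasure a b).mono fun _ hz =>
          ENNReal.ofReal_le_ofReal (exp_mul_le_one_sub_rpow_neg ht hz.2)
    _ = ENNReal.ofReal (beta a (b - t) / beta a b) := by
        rw [lintegral_one_sub_rpow_betaMeasure ha (ht.trans_lt htb) (by linarith),
          ← sub_eq_add_neg]

theorem stmt10_general {t : ℝ} (ha : 0 < a) (ht : 0 ≤ t) (htb : t < b) :
    ∫ z, Real.exp (t * z) ∂betaMeasure a b ≤ beta a (b - t) / beta a b := by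
  have hratio : 0 ≤ beta a (b - t) / beta a b :=
    (div_pos (beta_pos ha (sub_pos.2 htb)) (beta_pos ha (ht.trans_lt htb))).le
  rw [integral_eq_lintegral_of_nonneg_ae (.of_forall fun _ => (Real.exp_pos _).le) (by fun_prop)]
  exact ENNReal.toReal_le_of_le_ofReal hratio (lintegral_exp_mul_betaMeasure_le ha ht htb)

end BetaMeasure

/-- **Exponential-moment bound for Beta(1, M).** If `Z ~ Beta(1, M)` then
`E[exp(M·Z/2)] ≤ 2`. -/
theorem stmt10 (M : ℝ) (hM : 1 ≤ M) :
    ∫ z, Real.exp (M * z / 2) ∂(betaMeasure 1 M) ≤ 2 := by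
  have hM₀ : 0 < M := one_pos.trans_le hM
  simpa only [sub_half, beta_one_half_div_beta_one hM₀, div_mul_eq_mul_div] using
    stmt10_general one_pos (half_pos hM₀).le (half_lt_self hM₀)
end

section
/- Let σ > 0 and let ν ≤ ν' be real numbers. Let G be the Gaussian measure on ℝ with mean ν and variance σ², and G' the Gaussian measure with mean ν' and variance σ². Let G̃ and G̃' be the conditional probability measures obtained by conditioning G and G', respectively, on the interval [0, 1] (these are well-defined since Gaussian measures assign positive mass to [0,1]). Then G̃' stochastically dominates G̃: for every t ∈ ℝ, G̃'([t, ∞)) ≥ G̃([t, ∞)). -/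
open MeasureTheory ProbabilityTheory
open scoped ENNReal NNReal

/-!
The likelihood ratio of two Gaussian densities with means `ν ≤ ν'` and the same variance is
nondecreasing. This property survives restriction to a set and normalisation of the densities.
Integrating the cross-multiplied inequality over `x ∉ u` and `y ∈ u`, for an upper set `u`, gives
`ρ' uᶜ * ρ u ≤ ρ uᶜ * ρ' u` for the normalised measures `ρ` and `ρ'`. Adding `ρ u * ρ' u` to both
sides turns this into `ρ u ≤ ρ' u`.
-/

/-- The ratio `g / f` of two densities is nondecreasing, the condition under which the law with
density `g` dominates the law with density `f`. The inequality is cross-multiplied, so that it is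
meaningful where a density vanishes. -/
def MonotoneLikelihoodRatio {α : Type*} [Preorder α] (f g : α → ℝ≥0∞) : Prop :=
  ∀ ⦃x y⦄, x ≤ y → g x * f y ≤ f x * g y

namespace MonotoneLikelihoodRatio

lemma const_smul {α : Type*} [Preorder α] {f g : α → ℝ≥0∞} (h : MonotoneLikelihoodRatio f g)
    (a b : ℝ≥0∞) : MonotoneLikelihoodRatio (a • f) (b • g) := fun x y hxy ↦
  calc b * g x * (a * f y) = a * b * (g x * f y) := by ring
    _ ≤ a * b * (f x * g y) := by gcongr a * b * ?_; exact h hxy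
    _ = a * f x * (b * g y) := by ring

lemma withDensity_mul_withDensity_le {α : Type*} [Preorder α] [MeasurableSpace α] {f g : α → ℝ≥0∞}
    (h : MonotoneLikelihoodRatio f g) (hf : Measurable f) (hg : Measurable g) (μ : Measure α)
    {s t : Set α} (hs : MeasurableSet s) (ht : MeasurableSet t) (hst : ∀ x ∈ s, ∀ y ∈ t, x ≤ y) :
    μ.withDensity g s * μ.withDensity f t ≤ μ.withDensity f s * μ.withDensity g t := by
  simp only [withDensity_apply _ hs, withDensity_apply _ ht]
  calc (∫⁻ x in s, g x ∂μ) * ∫⁻ y in t, f y ∂μ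
      = ∫⁻ x in s, ∫⁻ y in t, g x * f y ∂μ ∂μ :=
        (lintegral_lintegral_mul hg.aemeasurable hf.aemeasurable).symm
    _ ≤ ∫⁻ x in s, ∫⁻ y in t, f x * g y ∂μ ∂μ :=
        setLIntegral_mono' hs fun x hx ↦ setLIntegral_mono' ht fun y hy ↦ h (hst x hx y hy)
    _ = (∫⁻ x in s, f x ∂μ) * ∫⁻ y in t, g y ∂μ :=
        lintegral_lintegral_mul hf.aemeasurable hg.aemeasurable

section LinearOrder

variable {α : Type*} [LinearOrder α] [MeasurableSpace α] {f g : α → ℝ≥0∞} {u : Set α}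

lemma withDensity_apply_le (h : MonotoneLikelihoodRatio f g) (hf : Measurable f)
    (hg : Measurable g) (μ : Measure α) [IsZeroOrProbabilityMeasure (μ.withDensity f)]
    [IsProbabilityMeasure (μ.withDensity g)] (hu : IsUpperSet u) (hum : MeasurableSet u) :
    μ.withDensity f u ≤ μ.withDensity g u := by
  set ρ := μ.withDensity f
  set ρ' := μ.withDensity g
  have cross : ρ' uᶜ * ρ u ≤ ρ uᶜ * ρ' u :=
    h.withDensity_mul_withDensity_le hf hg μ hum.compl hum fun x hx y hy ↦
      le_of_not_ge fun hyx ↦ hx (hu hyx hy)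
  calc ρ u = (ρ' u + ρ' uᶜ) * ρ u := by rw [prob_add_prob_compl hum, one_mul]
    _ = ρ u * ρ' u + ρ' uᶜ * ρ u := by ring
    _ ≤ ρ u * ρ' u + ρ uᶜ * ρ' u := by gcongr
    _ = ρ Set.univ * ρ' u := by rw [← add_mul, measure_add_measure_compl hum]
    _ ≤ ρ' u := mul_le_of_le_one_left' prob_le_one

lemma cond_withDensity_apply_le (h : MonotoneLikelihoodRatio f g) (hf : Measurable f)
    (hg : Measurable g) (μ : Measure α) [SFinite μ] {s : Set α} (hs₀ : μ.withDensity g s ≠ 0)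
    (hs : μ.withDensity g s ≠ ∞) (hu : IsUpperSet u) (hum : MeasurableSet u) :
    (μ.withDensity f)[|s] u ≤ (μ.withDensity g)[|s] u := by
  have cond_eq {k : α → ℝ≥0∞} (hk : Measurable k) : (μ.withDensity k)[|s] =
      (μ.restrict s).withDensity ((μ.withDensity k s)⁻¹ • k) := by
    rw [withDensity_smul _ hk, ← restrict_withDensity', ProbabilityTheory.cond]
  have isZeroOrProb : IsZeroOrProbabilityMeasure (μ.withDensity f)[|s] := inferInstance
  have isProb : IsProbabilityMeasure (μ.withDensity g)[|s] :=
    cond_isProbabilityMeasure_of_finite hs₀ hs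
  rw [cond_eq hf] at isZeroOrProb ⊢
  rw [cond_eq hg] at isProb ⊢
  exact (h.const_smul _ _).withDensity_apply_le (hf.const_smul _) (hg.const_smul _) _ hu hum

end LinearOrder

end MonotoneLikelihoodRatio

lemma gaussianPDFReal_mul_gaussianPDFReal_le (v : ℝ≥0) {ν ν' x y : ℝ} (hν : ν ≤ ν') (hxy : x ≤ y) :
    gaussianPDFReal ν' v x * gaussianPDFReal ν v y ≤
      gaussianPDFReal ν v x * gaussianPDFReal ν' v y := by
  have exponent_le : -(x - ν') ^ 2 / (2 * v) + -(y - ν) ^ 2 / (2 * v) ≤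
      -(x - ν) ^ 2 / (2 * v) + -(y - ν') ^ 2 / (2 * v) := by
    rw [← add_div, ← add_div]
    gcongr ?_ / _
    linarith [mul_nonneg (sub_nonneg.2 hν) (sub_nonneg.2 hxy)]
  simp only [gaussianPDFReal, mul_mul_mul_comm _ (Real.exp _), ← Real.exp_add]
  gcongr

lemma monotoneLikelihoodRatio_gaussianPDF (v : ℝ≥0) {ν ν' : ℝ} (hν : ν ≤ ν') :
    MonotoneLikelihoodRatio (gaussianPDF ν v) (gaussianPDF ν' v) := fun x y hxy ↦ by
  simp only [gaussianPDF, ← ENNReal.ofReal_mul (gaussianPDFReal_nonneg _ _ _)]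
  exact ENNReal.ofReal_le_ofReal (gaussianPDFReal_mul_gaussianPDFReal_le v hν hxy)

theorem stmt14_general {v : ℝ≥0} (hv : v ≠ 0) {ν ν' : ℝ} (hν : ν ≤ ν') {s : Set ℝ}
    (hs : volume s ≠ 0) {u : Set ℝ} (hu : IsUpperSet u) :
    (gaussianReal ν v)[|s] u ≤ (gaussianReal ν' v)[|s] u := by
  have hs₀ : gaussianReal ν' v s ≠ 0 := fun h ↦ hs (gaussianReal_absolutelyContinuous' ν' hv h)
  have hs_top : gaussianReal ν' v s ≠ ∞ := measure_ne_top _ _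
  simp only [gaussianReal_of_var_ne_zero _ hv] at hs₀ hs_top ⊢
  exact (monotoneLikelihoodRatio_gaussianPDF v hν).cond_withDensity_apply_le
    (measurable_gaussianPDF ν v) (measurable_gaussianPDF ν' v) volume hs₀ hs_top hu
    hu.ordConnected.measurableSet

/-- **Truncated Gaussians are stochastically ordered by their means (Lemma D.3).** Let
`G̃` and `G̃'` be the Gaussian measures with means `ν ≤ ν'` and common variance `σ² > 0`,
each conditioned on `[0,1]`. Then `G̃'` stochastically dominates `G̃`:
`G̃'([t, ∞)) ≥ G̃([t, ∞))` for every `t`. -/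
theorem stmt14 (σ : ℝ≥0) (hσ : 0 < σ) (ν ν' : ℝ) (hνν' : ν ≤ ν') (t : ℝ) :
    (gaussianReal ν (σ ^ 2))[|Set.Icc (0 : ℝ) 1] (Set.Ici t) ≤
      (gaussianReal ν' (σ ^ 2))[|Set.Icc (0 : ℝ) 1] (Set.Ici t) :=
  stmt14_general (pow_pos hσ 2).ne' hνν' (by simp) (isUpperSet_Ici t)
end

section
/- Let P be a probability measure on [0,1], let μ be a random variable with law P, and conditionally on μ let B_1, …, B_N be independent Bernoulli(μ) random variables. Let M = E[μ | B_1, …, B_N] be the posterior mean, and let N₀ ≤ N and let Z be the event {B_1 = ⋯ = B_{N₀} = 0}, assumed to have positive probability. Then the unconditional law of M stochastically dominates the conditional law of M given Z: for every t ∈ ℝ, Pr[M ≥ t | Z] ≤ Pr[M ≥ t]. -/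
open MeasureTheory ProbabilityTheory

/-- `B 0, …, B (N−1)` are, conditionally on `μ`, independent Bernoulli(`μ`) samples:
for every measurable `A ⊆ ℝ` and every outcome vector `b`, the joint probability is
given by integrating the Bernoulli likelihood against the law of `μ`. -/
def IsBernoulliSample {Ω : Type*} [MeasurableSpace Ω] (P : Measure Ω)
    (μ : Ω → ℝ) {N : ℕ} (B : Fin N → Ω → Bool) : Prop :=
  ∀ (A : Set ℝ), MeasurableSet A → ∀ b : Fin N → Bool,
    P (μ ⁻¹' A ∩ {ω | ∀ i, B i ω = b i}) =
      ∫⁻ x in A, ∏ i, ENNReal.ofReal (if b i then x else 1 - x) ∂(Measure.map μ P)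

/-!
The weight `∫ x ^ s * (1 - x) ^ f ∂ν` of an outcome with `s` successes and `f` failures is
log-convex in `s` along `s + f = n`: writing products of weights as double integrals over `(x, y)`
and symmetrizing, this reduces to `0 ≤ (u ^ a - v ^ a) * (u ^ b - v ^ b)` with `u = x * (1 - y)`
and `v = y * (1 - x)`. On the lattice of outcomes log-convexity is the FKG lattice condition, so
lower sets and upper sets of outcomes are negatively correlated. On consecutive counts it says that
the posterior mean `M` increases with the number of successes, so `{t ≤ M}` is an upper set of
outcomes, whereas an initial run of zeros is a lower set.
-/

/-- Log-supermodularity of a weight on a lattice: the FKG lattice condition, under which lower and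
upper sets are negatively correlated. -/
def IsLogSupermodular {α R : Type*} [Lattice α] [Mul R] [LE R] (w : α → R) : Prop :=
  ∀ a b, w a * w b ≤ w (a ⊓ b) * w (a ⊔ b)

section Lattice

variable {α : Type*} [DistribLattice α] [Finite α] [MeasurableSpace α] [MeasurableSingletonClass α]

theorem IsLogSupermodular.measureReal_inter_mul_univ_le {ρ : Measure α} [IsFiniteMeasure ρ]
    (hρ : IsLogSupermodular fun a => ρ.real {a}) {L U : Set α} (hL : IsLowerSet L)
    (hU : IsUpperSet U) :
    ρ.real (L ∩ U) * ρ.real Set.univ ≤ ρ.real L * ρ.real U := by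
  classical
  have := Fintype.ofFinite α
  let w (a : α) : ℝ := ρ.real {a}
  have hw : 0 ≤ w := fun _ => measureReal_nonneg
  have hsum (s : Finset α) : ∑ a ∈ s, w a = ρ.real s := sum_measureReal_singleton s
  have hfour := four_functions_theorem w w w w hw hw hw hw hρ (L ∩ U).toFinset Finset.univ
  simp only [hsum, Finset.coe_infs, Finset.coe_sups, Set.coe_toFinset, Finset.coe_univ] at hfour
  refine hfour.trans (mul_le_mul (measureReal_mono ?_) (measureReal_mono ?_)
    measureReal_nonneg measureReal_nonneg)
  · rintro _ ⟨a, ha, b, -, rfl⟩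
    exact hL inf_le_left ha.1
  · rintro _ ⟨a, ha, b, -, rfl⟩
    exact hU le_sup_left ha.2

theorem IsLogSupermodular.cond_preimage_le {Ω : Type*} [MeasurableSpace Ω] {P : Measure Ω}
    [IsProbabilityMeasure P] {X : Ω → α} (hX : Measurable X)
    (hP : IsLogSupermodular fun a => P.real (X ⁻¹' {a})) {L U : Set α} (hL : IsLowerSet L)
    (hU : IsUpperSet U) (hL₀ : P (X ⁻¹' L) ≠ 0) :
    P[|X ⁻¹' L] (X ⁻¹' U) ≤ P (X ⁻¹' U) := by
  have hmap (T : Set α) : (P.map X).real T = P.real (X ⁻¹' T) :=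
    map_measureReal_apply hX T.toFinite.measurableSet
  have hcorr : P.real (X ⁻¹' L ∩ X ⁻¹' U) ≤ P.real (X ⁻¹' L) * P.real (X ⁻¹' U) := by
    have hρ : IsLogSupermodular fun a => (P.map X).real {a} := by simpa only [hmap] using hP
    simpa [hmap] using hρ.measureReal_inter_mul_univ_le hL hU
  rw [cond_apply (hX L.toFinite.measurableSet), ENNReal.inv_mul_le_iff hL₀ (by finiteness),
    ← ENNReal.toReal_le_toReal (by finiteness) (by finiteness), ENNReal.toReal_mul]
  exact hcorr

end Lattice

theorem condExp_comap_ae_eq_setAverage {Ω α E : Type*} [MeasurableSpace Ω] [MeasurableSpace α]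
    [Countable α] [MeasurableSingletonClass α] [NormedAddCommGroup E] [NormedSpace ℝ E]
    [CompleteSpace E] {P : Measure Ω} [IsFiniteMeasure P] {X : Ω → α} (hX : Measurable X)
    {f : Ω → E} (hf : Integrable f P) :
    P[f|MeasurableSpace.comap X inferInstance] =ᵐ[P]
      fun ω => ⨍ ω' in X ⁻¹' {X ω}, f ω' ∂P := by
  obtain ⟨g, -, hg⟩ := (stronglyMeasurable_condExp (m := MeasurableSpace.comap X inferInstance)
    (μ := P) (f := f)).exists_eq_measurable_comp
  rw [hg]
  refine ae_of_ae_map (p := fun a => g a = ⨍ ω' in X ⁻¹' {a}, f ω' ∂P) hX.aemeasurable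
    (ae_iff_of_countable.2 fun a ha => ?_)
  have hfib : MeasurableSet (X ⁻¹' {a}) := hX (measurableSet_singleton a)
  rw [Measure.map_apply hX (measurableSet_singleton a)] at ha
  have hint : ∫ ω in X ⁻¹' {a}, f ω ∂P = P.real (X ⁻¹' {a}) • g a := by
    have hconst : Set.EqOn (g ∘ X) (fun _ => g a) (X ⁻¹' {a}) := fun _ hω => congrArg g hω
    rw [← setIntegral_condExp hX.comap_le hf ⟨{a}, measurableSet_singleton a, rfl⟩, hg,
      setIntegral_congr_fun hfib hconst, setIntegral_const]
  rw [setAverage_eq, hint, inv_smul_smul₀ ((measureReal_ne_zero_iff (by finiteness)).2 ha)]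

theorem div_add_le_div_add_of_mul_self_le {K : Type*} [Field K] [LinearOrder K]
    [IsStrictOrderedRing K] {p q r : K} (hp : 0 ≤ p) (hq : 0 ≤ q) (hr : 0 ≤ r)
    (h : q * q ≤ r * p) : q / (q + r) ≤ p / (p + q) := by
  rcases hq.eq_or_lt with rfl | hq
  · rw [zero_div]
    positivity
  · rw [div_le_div_iff₀ (by positivity) (by positivity)]
    linarith

section PowSymmetrization

variable {R : Type*} [CommRing R] [LinearOrder R] [IsStrictOrderedRing R]

theorem sub_pow_mul_sub_pow_nonneg {u v : R} (hu : 0 ≤ u) (hv : 0 ≤ v) (a b : ℕ) :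
    0 ≤ (u ^ a - v ^ a) * (u ^ b - v ^ b) := by
  rcases le_total u v with h | h
  · exact mul_nonneg_of_nonpos_of_nonpos
      (sub_nonpos.2 (pow_le_pow_left₀ hu h a)) (sub_nonpos.2 (pow_le_pow_left₀ hu h b))
  · exact mul_nonneg
      (sub_nonneg.2 (pow_le_pow_left₀ hv h a)) (sub_nonneg.2 (pow_le_pow_left₀ hv h b))

theorem pow_mul_pow_add_swap_le {x x' y y' : R} (hx : 0 ≤ x) (hx' : 0 ≤ x') (hy : 0 ≤ y)
    (hy' : 0 ≤ y') (s f a b : ℕ) :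
    x ^ (s + a) * x' ^ (f + b) * (y ^ (s + b) * y' ^ (f + a)) +
        x ^ (s + b) * x' ^ (f + a) * (y ^ (s + a) * y' ^ (f + b)) ≤
      x ^ s * x' ^ (f + (a + b)) * (y ^ (s + (a + b)) * y' ^ f) +
        x ^ (s + (a + b)) * x' ^ f * (y ^ s * y' ^ (f + (a + b))) := by
  have hdiff : 0 ≤ (x * y) ^ s * (x' * y') ^ f *
      (((x * y') ^ a - (y * x') ^ a) * ((x * y') ^ b - (y * x') ^ b)) :=
    mul_nonneg (by positivity)
      (sub_pow_mul_sub_pow_nonneg (mul_nonneg hx hy') (mul_nonneg hy hx') a b)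
  rw [← sub_nonneg]
  convert hdiff using 1
  ring

end PowSymmetrization

/-- The marginal likelihood of a particular outcome vector with `s` successes and `f` failures
under the prior `ν` on the Bernoulli parameter. -/
noncomputable def marginalLikelihood (ν : Measure ℝ) (s f : ℕ) : ℝ :=
  ∫ x, x ^ s * (1 - x) ^ f ∂ν

/-- The mean of the posterior of the Bernoulli parameter with prior `ν` after `s` successes and
`f` failures, by Bayes' rule. It is `0` when the data have marginal likelihood `0`. -/
noncomputable def posteriorMean (ν : Measure ℝ) (s f : ℕ) : ℝ :=
  marginalLikelihood ν (s + 1) f / marginalLikelihood ν s f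

section Prior

variable {ν : Measure ℝ}

theorem marginalLikelihood_nonneg (hν : ∀ᵐ x ∂ν, x ∈ Set.Icc (0 : ℝ) 1) (s f : ℕ) :
    0 ≤ marginalLikelihood ν s f := by
  refine integral_nonneg_of_ae ?_
  filter_upwards [hν] with x hx
  exact mul_nonneg (pow_nonneg hx.1 s) (pow_nonneg (sub_nonneg.2 hx.2) f)

variable [IsFiniteMeasure ν]

theorem integrable_pow_mul_one_sub_pow (hν : ∀ᵐ x ∂ν, x ∈ Set.Icc (0 : ℝ) 1) (s f : ℕ) :
    Integrable (fun x : ℝ => x ^ s * (1 - x) ^ f) ν := by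
  refine .of_mem_Icc 0 1 (by fun_prop) ?_
  filter_upwards [hν] with x hx
  have hx₀ : 0 ≤ x := hx.1
  have hx₁ : 0 ≤ 1 - x := sub_nonneg.2 hx.2
  exact ⟨by positivity, mul_le_one₀ (pow_le_one₀ hx₀ hx.2) (by positivity)
    (pow_le_one₀ hx₁ (sub_le_self 1 hx₀))⟩

theorem marginalLikelihood_eq_add (hν : ∀ᵐ x ∂ν, x ∈ Set.Icc (0 : ℝ) 1) (s f : ℕ) :
    marginalLikelihood ν s f =
      marginalLikelihood ν (s + 1) f + marginalLikelihood ν s (f + 1) := by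
  unfold marginalLikelihood
  rw [← integral_add (integrable_pow_mul_one_sub_pow hν _ _)
    (integrable_pow_mul_one_sub_pow hν _ _)]
  congr with x
  ring

theorem marginalLikelihood_mul_le (hν : ∀ᵐ x ∂ν, x ∈ Set.Icc (0 : ℝ) 1) (s f a b : ℕ) :
    marginalLikelihood ν (s + a) (f + b) * marginalLikelihood ν (s + b) (f + a) ≤
      marginalLikelihood ν s (f + (a + b)) * marginalLikelihood ν (s + (a + b)) f := by
  let w (m n : ℕ) (x : ℝ) : ℝ := x ^ m * (1 - x) ^ n
  have hint (m n m' n' : ℕ) : Integrable (fun z : ℝ × ℝ => w m n z.1 * w m' n' z.2) (ν.prod ν) :=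
    (integrable_pow_mul_one_sub_pow hν m n).mul_prod (integrable_pow_mul_one_sub_pow hν m' n')
  have hprod (m n m' n' : ℕ) :
      ∫ z, (w m n z.1 * w m' n' z.2 + w m' n' z.1 * w m n z.2) ∂(ν.prod ν) =
        2 * (marginalLikelihood ν m n * marginalLikelihood ν m' n') := by
    rw [integral_add (hint _ _ _ _) (hint _ _ _ _), integral_prod_mul, integral_prod_mul,
      mul_comm (∫ x, w m' n' x ∂ν), ← two_mul]
    rfl
  refine le_of_mul_le_mul_left ?_ (zero_lt_two' ℝ)
  rw [← hprod, ← hprod]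
  refine integral_mono_ae ((hint _ _ _ _).add (hint _ _ _ _))
    ((hint _ _ _ _).add (hint _ _ _ _)) ?_
  filter_upwards [Measure.quasiMeasurePreserving_fst.ae hν,
    Measure.quasiMeasurePreserving_snd.ae hν] with ⟨x, y⟩ ⟨hx₀, hx₁⟩ ⟨hy₀, hy₁⟩
  exact pow_mul_pow_add_swap_le hx₀ (sub_nonneg.2 hx₁) hy₀ (sub_nonneg.2 hy₁) s f a b

theorem posteriorMean_succ_right_le_succ_left (hν : ∀ᵐ x ∂ν, x ∈ Set.Icc (0 : ℝ) 1) (s f : ℕ) :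
    posteriorMean ν s (f + 1) ≤ posteriorMean ν (s + 1) f := by
  rw [posteriorMean, posteriorMean, marginalLikelihood_eq_add hν (s + 1) f,
    marginalLikelihood_eq_add hν s (f + 1)]
  exact div_add_le_div_add_of_mul_self_le (marginalLikelihood_nonneg hν _ _)
    (marginalLikelihood_nonneg hν _ _) (marginalLikelihood_nonneg hν _ _)
    (marginalLikelihood_mul_le hν s f 1 1)

theorem posteriorMean_add_right_le_add_left (hν : ∀ᵐ x ∂ν, x ∈ Set.Icc (0 : ℝ) 1) (s f d : ℕ) :
    posteriorMean ν s (f + d) ≤ posteriorMean ν (s + d) f := by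
  induction d generalizing f with
  | zero => rfl
  | succ d ih =>
    calc posteriorMean ν s (f + (d + 1))
        = posteriorMean ν s (f + 1 + d) := by rw [add_right_comm, add_assoc]
      _ ≤ posteriorMean ν (s + d) (f + 1) := ih (f + 1)
      _ ≤ posteriorMean ν (s + d + 1) f := posteriorMean_succ_right_le_succ_left hν _ _

end Prior

section Outcomes

variable {ι : Type*} [Fintype ι]

/-- The number of successes in an outcome vector, where `true` encodes reward `1`. -/
def numSuccesses (b : ι → Bool) : ℕ := Finset.card {i | b i}

/-- The number of failures in an outcome vector, where `false` encodes reward `0`. -/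
def numFailures (b : ι → Bool) : ℕ := Finset.card {i | ¬ b i}

theorem numSuccesses_add_numFailures (b : ι → Bool) :
    numSuccesses b + numFailures b = Fintype.card ι :=
  Finset.card_filter_add_card_filter_not _

theorem numSuccesses_mono : Monotone (numSuccesses : (ι → Bool) → ℕ) := fun _ _ hbc =>
  Finset.card_le_card (Finset.monotone_filter_right _ fun i _ => hbc i)

theorem numSuccesses_inf_add_numSuccesses_sup (b c : ι → Bool) :
    numSuccesses (b ⊓ c) + numSuccesses (b ⊔ c) = numSuccesses b + numSuccesses c := by
  classical
  have hcard := Finset.card_inter_add_card_union {i | b i} {i | c i}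
  rw [← Finset.filter_and, ← Finset.filter_or] at hcard
  simpa [numSuccesses] using hcard

theorem prod_ite_eq_pow_numSuccesses_mul {M : Type*} [CommMonoid M] (b : ι → Bool) (x y : M) :
    ∏ i, (if b i then x else y) = x ^ numSuccesses b * y ^ numFailures b := by
  rw [Finset.prod_ite, Finset.prod_const, Finset.prod_const, numSuccesses, numFailures]

variable {ν : Measure ℝ} [IsFiniteMeasure ν]

theorem isLogSupermodular_marginalLikelihood (hν : ∀ᵐ x ∂ν, x ∈ Set.Icc (0 : ℝ) 1) :
    IsLogSupermodular fun b : ι → Bool =>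
      marginalLikelihood ν (numSuccesses b) (numFailures b) := by
  intro b c
  obtain ⟨d, hd⟩ := Nat.exists_eq_add_of_le (numSuccesses_mono (inf_le_left : b ⊓ c ≤ b))
  obtain ⟨e, he⟩ := Nat.exists_eq_add_of_le (numSuccesses_mono (inf_le_right : b ⊓ c ≤ c))
  have hcount := numSuccesses_inf_add_numSuccesses_sup b c
  have hb := numSuccesses_add_numFailures b
  have hc := numSuccesses_add_numFailures c
  have hinf := numSuccesses_add_numFailures (b ⊓ c)
  have hsup := numSuccesses_add_numFailures (b ⊔ c)
  convert marginalLikelihood_mul_le hν (numSuccesses (b ⊓ c)) (numFailures (b ⊔ c)) d e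
    using 3 <;> omega

theorem monotone_posteriorMean (hν : ∀ᵐ x ∂ν, x ∈ Set.Icc (0 : ℝ) 1) :
    Monotone fun b : ι → Bool => posteriorMean ν (numSuccesses b) (numFailures b) := by
  intro b c hbc
  obtain ⟨d, hd⟩ := Nat.exists_eq_add_of_le (numSuccesses_mono hbc)
  have hb := numSuccesses_add_numFailures b
  have hc := numSuccesses_add_numFailures c
  have hf : numFailures b = numFailures c + d := by omega
  simpa only [hd, hf] using posteriorMean_add_right_le_add_left hν _ _ d

end Outcomes

namespace IsBernoulliSample

variable {Ω : Type*} [MeasurableSpace Ω] {P : Measure Ω} {N : ℕ} {μ : Ω → ℝ} {B : Fin N → Ω → Bool}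

theorem map_restrict (hcond : IsBernoulliSample P μ B) (hμ : Measurable μ)
    (hrange : ∀ᵐ ω ∂P, μ ω ∈ Set.Icc (0 : ℝ) 1) (b : Fin N → Bool) :
    (P.restrict {ω | ∀ i, B i ω = b i}).map μ = (P.map μ).withDensity
      fun x => ENNReal.ofReal (x ^ numSuccesses b * (1 - x) ^ numFailures b) := by
  ext A hA
  rw [Measure.map_apply hμ hA, Measure.restrict_apply (hμ hA), hcond A hA b,
    withDensity_apply _ hA]
  refine lintegral_congr_ae (ae_restrict_of_ae ?_)
  filter_upwards [(ae_map_iff hμ.aemeasurable measurableSet_Icc).2 hrange] with x hx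
  rw [← prod_ite_eq_pow_numSuccesses_mul, ENNReal.ofReal_prod_of_nonneg]
  intro i _
  split_ifs
  exacts [hx.1, sub_nonneg.2 hx.2]

theorem setIntegral_pow (hcond : IsBernoulliSample P μ B) (hμ : Measurable μ)
    (hrange : ∀ᵐ ω ∂P, μ ω ∈ Set.Icc (0 : ℝ) 1) (b : Fin N → Bool) (k : ℕ) :
    ∫ ω in (fun ω i => B i ω) ⁻¹' {b}, μ ω ^ k ∂P =
      marginalLikelihood (P.map μ) (numSuccesses b + k) (numFailures b) := by
  have hfib : (fun ω i => B i ω) ⁻¹' {b} = {ω | ∀ i, B i ω = b i} := by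
    ext ω
    simp [funext_iff]
  rw [hfib, ← integral_map (φ := μ) (f := fun x => x ^ k) hμ.aemeasurable (by fun_prop),
    hcond.map_restrict hμ hrange b,
    integral_withDensity_eq_integral_toReal_smul (by fun_prop) (by simp)]
  refine integral_congr_ae ?_
  filter_upwards [(ae_map_iff hμ.aemeasurable measurableSet_Icc).2 hrange] with x hx
  have hx₀ : 0 ≤ x := hx.1
  have hx₁ : 0 ≤ 1 - x := sub_nonneg.2 hx.2
  rw [ENNReal.toReal_ofReal (by positivity), smul_eq_mul]
  ring

theorem measureReal_preimage_singleton (hcond : IsBernoulliSample P μ B) (hμ : Measurable μ)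
    (hrange : ∀ᵐ ω ∂P, μ ω ∈ Set.Icc (0 : ℝ) 1) (b : Fin N → Bool) :
    P.real ((fun ω i => B i ω) ⁻¹' {b}) =
      marginalLikelihood (P.map μ) (numSuccesses b) (numFailures b) := by
  simpa using hcond.setIntegral_pow hμ hrange b 0

theorem condExp_ae_eq_posteriorMean [IsFiniteMeasure P] (hcond : IsBernoulliSample P μ B)
    (hμ : Measurable μ) (hB : ∀ i, Measurable (B i))
    (hrange : ∀ᵐ ω ∂P, μ ω ∈ Set.Icc (0 : ℝ) 1) :
    P[μ|MeasurableSpace.comap (fun ω (i : Fin N) => B i ω) inferInstance] =ᵐ[P] fun ω =>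
      posteriorMean (P.map μ) (numSuccesses fun i => B i ω) (numFailures fun i => B i ω) := by
  filter_upwards [condExp_comap_ae_eq_setAverage (measurable_pi_iff.2 hB)
    (.of_mem_Icc 0 1 hμ.aemeasurable hrange)] with ω hω
  have hmean := hcond.setIntegral_pow hμ hrange (fun i => B i ω) 1
  simp only [pow_one] at hmean
  rw [hω, setAverage_eq, hmean, hcond.measureReal_preimage_singleton hμ hrange, smul_eq_mul,
    inv_mul_eq_div, posteriorMean]

end IsBernoulliSample

theorem stmt17_general {Ω : Type*} [MeasurableSpace Ω] (P : Measure Ω) [IsProbabilityMeasure P]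
    {N : ℕ} (μ : Ω → ℝ) (B : Fin N → Ω → Bool)
    (hμ : Measurable μ) (hB : ∀ i, Measurable (B i))
    (hrange : ∀ᵐ ω ∂P, μ ω ∈ Set.Icc (0 : ℝ) 1)
    (hcond : IsBernoulliSample P μ B)
    {Z : Set (Fin N → Bool)} (hZ : IsLowerSet Z) (hZ₀ : P {ω | (fun i => B i ω) ∈ Z} ≠ 0) (t : ℝ) :
    P[|{ω | (fun i => B i ω) ∈ Z}]
        {ω | t ≤ (P[μ|MeasurableSpace.comap (fun ω (i : Fin N) => B i ω) inferInstance]) ω}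
      ≤ P {ω | t ≤
          (P[μ|MeasurableSpace.comap (fun ω (i : Fin N) => B i ω) inferInstance]) ω} := by
  set X : Ω → Fin N → Bool := fun ω i => B i ω
  have hX : Measurable X := measurable_pi_iff.2 hB
  have hν := (ae_map_iff hμ.aemeasurable measurableSet_Icc).2 hrange
  set U : Set (Fin N → Bool) :=
    {b | t ≤ posteriorMean (P.map μ) (numSuccesses b) (numFailures b)}
  have hU : IsUpperSet U := fun b c hbc hb => hb.trans (monotone_posteriorMean hν hbc)
  have hM : {ω | t ≤ (P[μ|MeasurableSpace.comap X inferInstance]) ω} =ᵐ[P] X ⁻¹' U := by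
    filter_upwards [hcond.condExp_ae_eq_posteriorMean hμ hB hrange] with ω hω
    exact congrArg (t ≤ ·) hω
  have hlog : IsLogSupermodular fun b => P.real (X ⁻¹' {b}) := by
    simpa only [X, hcond.measureReal_preimage_singleton hμ hrange]
      using isLogSupermodular_marginalLikelihood hν
  rw [measure_congr (cond_absolutelyContinuous.ae_eq hM), measure_congr hM]
  exact hlog.cond_preimage_le hX hZ hU hZ₀

/-- **Conditioning on initial zero rewards lowers the posterior mean (Lemma B.11).**
Let `μ` have a prior on `[0,1]`, let `B_1, …, B_N` be conditionally i.i.d. Bernoulli(μ)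
samples, and let `M = E[μ | B_1, …, B_N]` be the posterior mean. If `Z` is the
positive-probability event that the first `N₀ ≤ N` samples all return reward `0`, then
for every `t`, `Pr[M ≥ t | Z] ≤ Pr[M ≥ t]`. -/
theorem stmt17 {Ω : Type*} [MeasurableSpace Ω] (P : Measure Ω) [IsProbabilityMeasure P]
    {N : ℕ} (μ : Ω → ℝ) (B : Fin N → Ω → Bool)
    (hμ : Measurable μ) (hB : ∀ i, Measurable (B i))
    (hrange : ∀ᵐ ω ∂P, μ ω ∈ Set.Icc (0 : ℝ) 1)
    (hcond : IsBernoulliSample P μ B)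
    (N₀ : ℕ) (hN₀ : N₀ ≤ N)
    (hZ : P {ω | ∀ i : Fin N, (i : ℕ) < N₀ → B i ω = false} ≠ 0)
    (t : ℝ) :
    P[|{ω | ∀ i : Fin N, (i : ℕ) < N₀ → B i ω = false}]
        {ω | t ≤ (P[μ|MeasurableSpace.comap (fun ω (i : Fin N) => B i ω) inferInstance]) ω}
      ≤ P {ω | t ≤
          (P[μ|MeasurableSpace.comap (fun ω (i : Fin N) => B i ω) inferInstance]) ω} :=
  stmt17_general P μ B hμ hB hrange hcond (Z := {b | ∀ i : Fin N, (i : ℕ) < N₀ → b i = false})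
    (fun _ _ hcb hb i hi => le_bot_iff.1 ((hcb i).trans_eq (hb i hi))) hZ t
end
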